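/- Let k be a field of characteristic 2 and let θ : k[z0,...,z6] → k[x0,...,x5] be the k-algebra homomorphism determined by θ(z0) = x0*x1 + x2*x3 + x4*x5 and θ(z_{i+1}) = x_i^2 for i = 0,...,5. Regard k[x0,...,x5] as a module over k[z0,...,z6] via θ. Then every polynomial in k[x0,...,x5] that is a k-linear combination of monomials of even total degree lies in the k[z0,...,z6]-submodule generated by the 16 elements: 1, the 14 quadratic monomials x_i*x_j with 0 ≤ i < j ≤ 5 and (i,j) ≠ (4,5), and the quartic monomial x0*x1*x2*x3. -/

import Mathlib

open MvPolynomial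

/-- The `k`-algebra homomorphism `θ : k[z0,...,z6] → k[x0,...,x5]` with
`θ(z0) = x0*x1 + x2*x3 + x4*x5` and `θ(z_{i+1}) = x_i^2`. -/
noncomputable def theta (k : Type*) [CommRing k] :
    MvPolynomial (Fin 7) k →ₐ[k] MvPolynomial (Fin 6) k :=
  aeval ![X 0 * X 1 + X 2 * X 3 + X 4 * X 5,
    X 0 ^ 2, X 1 ^ 2, X 2 ^ 2, X 3 ^ 2, X 4 ^ 2, X 5 ^ 2]

/-- Membership in the submodule generated by the 16 elements. -/
def InS (k : Type*) [Field k] (p : MvPolynomial (Fin 6) k) : Prop :=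
    ∃ (c0 c15 : MvPolynomial (Fin 7) k)
      (c : Fin 6 → Fin 6 → MvPolynomial (Fin 7) k),
      p = theta k c0 * 1
        + (∑ i : Fin 6, ∑ j : Fin 6,
            if i < j ∧ ¬(i = 4 ∧ j = 5) then theta k (c i j) * (X i * X j) else 0)
        + theta k c15 * (X 0 * X 1 * X 2 * X 3)

section
variable {k : Type*} [Field k]

theorem InS.add {p q : MvPolynomial (Fin 6) k} (hp : InS k p) (hq : InS k q) :
    InS k (p + q) := by
  obtain ⟨a, b, c, h⟩ := hp
  obtain ⟨a', b', c', h'⟩ := hq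
  refine ⟨a + a', b + b', fun i j => c i j + c' i j, ?_⟩
  have : (∑ i : Fin 6, ∑ j : Fin 6, if i < j ∧ ¬(i = 4 ∧ j = 5) then
      theta k (c i j + c' i j) * (X i * X j) else 0)
      = (∑ i : Fin 6, ∑ j : Fin 6,
            if i < j ∧ ¬(i = 4 ∧ j = 5) then theta k (c i j) * (X i * X j) else 0)
       + (∑ i : Fin 6, ∑ j : Fin 6,
            if i < j ∧ ¬(i = 4 ∧ j = 5) then theta k (c' i j) * (X i * X j) else 0) := by
    simp only [← Finset.sum_add_distrib]
    refine Finset.sum_congr rfl fun i _ => Finset.sum_congr rfl fun j _ => ?_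
    split_ifs
    · rw [map_add]; ring
    · simp
  rw [this, map_add, map_add, h, h']
  ring

theorem InS.smul {p : MvPolynomial (Fin 6) k} (r : MvPolynomial (Fin 7) k) (hp : InS k p) :
    InS k (theta k r * p) := by
  obtain ⟨a, b, c, h⟩ := hp
  refine ⟨r * a, r * b, fun i j => r * c i j, ?_⟩
  have : (∑ i : Fin 6, ∑ j : Fin 6, if i < j ∧ ¬(i = 4 ∧ j = 5) then
      theta k (r * c i j) * (X i * X j) else 0)
      = theta k r * (∑ i : Fin 6, ∑ j : Fin 6,
            if i < j ∧ ¬(i = 4 ∧ j = 5) then theta k (c i j) * (X i * X j) else 0) := by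
    simp only [Finset.mul_sum]
    refine Finset.sum_congr rfl fun i _ => Finset.sum_congr rfl fun j _ => ?_
    split_ifs
    · rw [map_mul]; ring
    · simp
  rw [this, map_mul, map_mul, h]
  ring

theorem InS.of_eq {p q : MvPolynomial (Fin 6) k} (h : InS k q) (e : p = q) : InS k p := e ▸ h

theorem InS.one : InS k 1 := ⟨1, 0, fun _ _ => 0, by simp⟩

theorem InS.zero : InS k 0 := ⟨0, 0, fun _ _ => 0, by simp⟩

theorem InS.top : InS k (X 0 * X 1 * X 2 * X 3) := ⟨0, 1, fun _ _ => 0, by simp⟩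

theorem InS.sub {p q : MvPolynomial (Fin 6) k} (hp : InS k p) (hq : InS k q) :
    InS k (p - q) := by
  have := hp.add (hq.smul (-1))
  rw [map_neg, map_one] at this
  convert this using 1
  ring

theorem theta_sq (i : Fin 6) : theta k (X i.succ) = X i ^ 2 := by
  fin_cases i <;> simp [theta]

theorem theta_zero : theta k (X 0) = X 0 * X 1 + X 2 * X 3 + X 4 * X 5 := by
  simp [theta]

theorem InS.sq {p : MvPolynomial (Fin 6) k} (i : Fin 6) (hp : InS k p) :
    InS k (X i ^ 2 * p) := by
  rw [← theta_sq]; exact hp.smul _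

theorem InS.z {p : MvPolynomial (Fin 6) k} (hp : InS k p) :
    InS k ((X 0 * X 1 + X 2 * X 3 + X 4 * X 5) * p) := by
  rw [← theta_zero]; exact hp.smul _

theorem InS.quad0 (i j : Fin 6) (h : i < j ∧ ¬(i = 4 ∧ j = 5)) : InS k (X i * X j) := by
  refine ⟨0, 0, fun a b => if a = i then if b = j then 1 else 0 else 0, ?_⟩
  rw [Finset.sum_eq_single i, Finset.sum_eq_single j]
  · simp [h]
  · intro b _ hb; simp [hb]
  · simp
  · intro b _ hb; simp [hb]
  · simp

theorem InS.quad45 : InS k (X 4 * X 5) := by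
  have := ((InS.one (k := k)).z.sub (InS.quad0 0 1 (by decide))).sub (InS.quad0 2 3 (by decide))
  convert this using 1
  ring

theorem InS.quad (i j : Fin 6) : InS k (X i * X j) := by
  have key : ∀ i j : Fin 6, i < j → InS k (X i * X j) := by
    intro i j hij
    by_cases h : i = 4 ∧ j = 5
    · obtain ⟨rfl, rfl⟩ := h; exact InS.quad45
    · exact InS.quad0 i j ⟨hij, h⟩
  rcases lt_trichotomy i j with h | h | h
  · exact key i j h
  · subst h
    have := (InS.one (k := k)).sq i
    convert this using 1
    ring
  · rw [mul_comm]; exact key j i h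

/-- Quartic containing exactly one of the three pairs. -/
theorem InS.quart (a b c c' d d' : Fin 6)
    (h : (X 0 * X 1 + X 2 * X 3 + X 4 * X 5 : MvPolynomial (Fin 6) k)
      = X a * X b + X c * X c' + X d * X d') :
    InS k (X a * X b * (X c * X d)) := by
  have := ((InS.quad (k := k) c d).z.sub ((InS.quad c' d).sq c)).sub ((InS.quad c d').sq d)
  rw [h] at this
  convert this using 1
  ring

theorem InS.q0145 : InS k (X 0 * X 1 * (X 4 * X 5)) := by
  have := ((InS.quad (k := k) 0 1).z.sub ((InS.one.sq 1).sq 0)).sub InS.top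
  convert this using 1
  ring

theorem InS.q2345 : InS k (X 2 * X 3 * (X 4 * X 5)) := by
  have := ((InS.quad (k := k) 2 3).z.sub ((InS.one.sq 3).sq 2)).sub InS.top
  convert this using 1
  ring

theorem InS.sext : InS k (X 0 * X 1 * X 2 * X 3 * X 4 * X 5) := by
  have := ((InS.top (k := k)).z.sub (((InS.quad 2 3).sq 1).sq 0)).sub (((InS.quad 0 1).sq 3).sq 2)
  convert this using 1
  ring

set_option maxHeartbeats 1600000 in
theorem InS.sqfree (e : Fin 6 → ℕ) (he : ∀ i, e i = 0 ∨ e i = 1) (hs : Even (∑ i, e i)) :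
    InS k (∏ i, X i ^ e i) := by
  have h0124 : InS k (X 0 * X 1 * X 2 * X 4) := by
    exact InS.of_eq (InS.quart (k := k) 0 1 2 3 4 5 (by ring)) (by ring)
  have h0125 : InS k (X 0 * X 1 * X 2 * X 5) := by
    exact InS.of_eq (InS.quart (k := k) 0 1 2 3 5 4 (by ring)) (by ring)
  have h0134 : InS k (X 0 * X 1 * X 3 * X 4) := by
    exact InS.of_eq (InS.quart (k := k) 0 1 3 2 4 5 (by ring)) (by ring)
  have h0135 : InS k (X 0 * X 1 * X 3 * X 5) := by
    exact InS.of_eq (InS.quart (k := k) 0 1 3 2 5 4 (by ring)) (by ring)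
  have h0234 : InS k (X 0 * X 2 * X 3 * X 4) := by
    exact InS.of_eq (InS.quart (k := k) 2 3 0 1 4 5 (by ring)) (by ring)
  have h0235 : InS k (X 0 * X 2 * X 3 * X 5) := by
    exact InS.of_eq (InS.quart (k := k) 2 3 0 1 5 4 (by ring)) (by ring)
  have h1234 : InS k (X 1 * X 2 * X 3 * X 4) := by
    exact InS.of_eq (InS.quart (k := k) 2 3 1 0 4 5 (by ring)) (by ring)
  have h1235 : InS k (X 1 * X 2 * X 3 * X 5) := by
    exact InS.of_eq (InS.quart (k := k) 2 3 1 0 5 4 (by ring)) (by ring)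
  have h0245 : InS k (X 0 * X 2 * X 4 * X 5) := by
    exact InS.of_eq (InS.quart (k := k) 4 5 0 1 2 3 (by ring)) (by ring)
  have h0345 : InS k (X 0 * X 3 * X 4 * X 5) := by
    exact InS.of_eq (InS.quart (k := k) 4 5 0 1 3 2 (by ring)) (by ring)
  have h1245 : InS k (X 1 * X 2 * X 4 * X 5) := by
    exact InS.of_eq (InS.quart (k := k) 4 5 1 0 2 3 (by ring)) (by ring)
  have h1345 : InS k (X 1 * X 3 * X 4 * X 5) := by
    exact InS.of_eq (InS.quart (k := k) 4 5 1 0 3 2 (by ring)) (by ring)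
  have h0145 : InS k (X 0 * X 1 * X 4 * X 5) := by
    exact InS.of_eq (InS.q0145 (k := k)) (by ring)
  have h2345 : InS k (X 2 * X 3 * X 4 * X 5) := by
    exact InS.of_eq (InS.q2345 (k := k)) (by ring)
  rw [Fin.prod_univ_six]
  rw [Fin.sum_univ_six] at hs
  rcases he 0 with h0 | h0 <;> rcases he 1 with h1 | h1 <;> rcases he 2 with h2 | h2 <;>
  rcases he 3 with h3 | h3 <;> rcases he 4 with h4 | h4 <;> rcases he 5 with h5 | h5 <;>
  rw [h0, h1, h2, h3, h4, h5] at hs ⊢ <;>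
  first
  | (exfalso; revert hs; decide)
  | skip
  all_goals simp only [pow_zero, pow_one, one_mul, mul_one]
  all_goals first
  | with_reducible exact InS.one
  | with_reducible exact InS.quad _ _
  | with_reducible exact InS.top
  | with_reducible exact InS.sext
  | with_reducible assumption

theorem InS.mono (m : Fin 6 →₀ ℕ) (a : k) (hs : Even (∑ i, m i)) : InS k (monomial m a) := by
  have h1 : InS k (∏ i, X i ^ (m i % 2)) := by
    apply InS.sqfree (fun i => m i % 2)
    · intro i; exact Nat.mod_two_eq_zero_or_one _
    · rw [Nat.even_iff] at hs ⊢
      rw [← hs, Finset.sum_nat_mod Finset.univ 2 (fun i => m i)]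
  have h2 := h1.smul (C a * ∏ i : Fin 6, X i.succ ^ (m i / 2))
  convert h2 using 1
  rw [map_mul, map_prod, mul_assoc, ← Finset.prod_mul_distrib, monomial_eq,
    Finsupp.prod_fintype _ _ (by simp)]
  refine congrArg₂ (· * ·) ?_ ?_
  · exact ((theta k).commutes a).symm
  · refine Finset.prod_congr rfl fun i _ => ?_
    rw [map_pow, theta_sq, ← pow_mul, ← pow_add, Nat.div_add_mod]

end

theorem stmt_4 {k : Type*} [Field k] [CharP k 2]
    (p : MvPolynomial (Fin 6) k)
    -- `p` is a `k`-linear combination of monomials of even total degree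
    (hp : ∀ m ∈ p.support, Even (∑ i, m i)) :
    -- `p` lies in the `k[z0,...,z6]`-submodule (via `θ`) generated by `1`,
    -- the 14 monomials `x_i*x_j` with `i < j`, `(i,j) ≠ (4,5)`, and `x0*x1*x2*x3`
    ∃ (c0 c15 : MvPolynomial (Fin 7) k)
      (c : Fin 6 → Fin 6 → MvPolynomial (Fin 7) k),
      p = theta k c0 * 1
        + (∑ i : Fin 6, ∑ j : Fin 6,
            if i < j ∧ ¬(i = 4 ∧ j = 5) then theta k (c i j) * (X i * X j) else 0)
        + theta k c15 * (X 0 * X 1 * X 2 * X 3) := by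
  change InS k p
  rw [p.as_sum]
  exact Finset.sum_induction _ (InS k) (fun _ _ => InS.add) InS.zero
    (fun m hm => InS.mono m _ (hp m hm))
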